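/- For all integers n ≥ 1 and 3 ≤ k ≤ n + 2, there exist integers 0 < a_1 < … < a_n with gcd(a_1,…,a_n) = 1 such that χ(a_1,…,a_n) = k. -/

import Mathlib

/-- The shift action of `ℤ` on `α^ℤ`: `(s · x)(n) = x(n + s)`. -/
def shift {α : Type*} (s : ℤ) (x : ℤ → α) : ℤ → α := fun n => x (n + s)

/-- The free part `F(2^ℤ)` of the shift action on `2^ℤ = (ℤ → Bool)`. -/
def FreePart : Set (ℤ → Bool) := {x | ∀ s : ℤ, s ≠ 0 → shift s x ≠ x}

/-- `c` is a Borel proper coloring of the Schreier graph `G_S` on `F(2^ℤ)`,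
where `S = {±a : a ∈ A}`: `c` is Borel and `c(x) ≠ c(s · x)` for all `x` and `s ∈ S`. -/
def IsBorelColoring (A : Finset ℕ) {k : ℕ}
    (c : {x : ℤ → Bool // x ∈ FreePart} → Fin k) : Prop :=
  Measurable c ∧
    ∀ (x : {x : ℤ → Bool // x ∈ FreePart}) (a : ℕ), a ∈ A →
      ∀ (h : shift (a : ℤ) x.1 ∈ FreePart), c x ≠ c ⟨shift (a : ℤ) x.1, h⟩

/-- The Borel chromatic number `χ(a₁, …, aₙ)` of the Schreier graph `G_S` on `F(2^ℤ)`,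
where `S = {±a : a ∈ A}`: the least `k` admitting a Borel proper `k`-coloring. -/
noncomputable def borelChromatic (A : Finset ℕ) : ℕ :=
  sInf {k : ℕ | ∃ c : {x : ℤ → Bool // x ∈ FreePart} → Fin k, IsBorelColoring A c}

/-!
Take `q = k - 1` and any `n`-element set `A` of non-multiples of `q` containing `1, …, q - 1`.

Upper bound: fix a Borel set of markers which is sparse and syndetic on every orbit. Between
consecutive markers, color by the residue mod `q` of the distance to the previous marker, but
slowly rotate the color classes by moving one class at a time into the one unused color, so that
at the next marker the coloring agrees with the one which starts there.

Lower bound: a coloring with at most `q` colors is `q`-periodic on every orbit. Since `qℤ` acts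
topologically transitively on the free part, the coloring is constant on a comeagre set, which
contradicts `1 ∈ A`.
-/

open Set Filter Topology

section RotatingColors

/-- The color of the residue class of `r` mod `q` at stage `s` of a process which recolors one
class at a time: at stage `n` the class of `n` receives the color `n` mod `q + 1`, so the current
color of `r` is the last `n ≤ s` with `n ≡ r` mod `q`. -/
def residueColor (q : ℕ) (s r : ℤ) : ZMod (q + 1) :=
  ((s - (s - r) % q : ℤ) : ZMod (q + 1))

variable {q : ℕ}

lemma residueColor_ne {s s' r r' : ℤ} (hq : 0 < q) (hss' : s ≤ s') (hs's : s' ≤ s + 1)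
    (hr : ¬ (q : ℤ) ∣ r - r') : residueColor q s r ≠ residueColor q s' r' := by
  have hq' : (0 : ℤ) < q := by exact_mod_cast hq
  set m := s - (s - r) % q with hm
  set n := s' - (s' - r') % q with hn
  have hmr : (q : ℤ) ∣ m - r := by
    convert Int.dvd_self_sub_emod (x := s - r) (m := (q : ℤ)) using 1; rw [hm]; ring
  have hnr : (q : ℤ) ∣ n - r' := by
    convert Int.dvd_self_sub_emod (x := s' - r') (m := (q : ℤ)) using 1; rw [hn]; ring
  intro h
  have hdvd : ((q + 1 : ℕ) : ℤ) ∣ n - m := (ZMod.intCast_eq_intCast_iff_dvd_sub m n _).1 h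
  -- `m` and `n` both lie in the window `(s - q, s + 1]`.
  have hlt : |n - m| < ((q + 1 : ℕ) : ℤ) := by
    have := Int.emod_nonneg (s - r) hq'.ne'
    have := Int.emod_lt_of_pos (s - r) hq'
    have := Int.emod_nonneg (s' - r') hq'.ne'
    have := Int.emod_lt_of_pos (s' - r') hq'
    rw [abs_lt]
    omega
  have hnm : n - m = 0 := Int.eq_zero_of_abs_lt_dvd hdvd hlt
  have : r - r' = (n - r') - (m - r) - (n - m) := by ring
  exact hr (this ▸ (hnr.sub hmr).sub (hnm ▸ dvd_zero _))

lemma residueColor_mul_succ (t r : ℤ) :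
    residueColor q ((q + 1) * t) r = residueColor q 0 (r - t) := by
  have hmod : ((q + 1) * t - r) % q = (0 - (r - t)) % q := by
    rw [show ((q : ℤ) + 1) * t - r = 0 - (r - t) + q * t by ring, Int.add_mul_emod_self_left]
  have hzero : ((q : ZMod (q + 1)) + 1) = 0 := by exact_mod_cast ZMod.natCast_self (q + 1)
  simp only [residueColor, hmod, Int.cast_sub, Int.cast_mul, Int.cast_add, Int.cast_natCast,
    Int.cast_one, hzero, zero_mul, Int.cast_zero]

/-- The color of a point whose previous and next markers are at relative positions `l ≤ 0 < u`.
The stage advances by one every `D` steps and stops after as many rotations as the gap length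
`u - l` requires, so that the end of the gap is colored by residues relative to its next marker. -/
def gapColor (q D : ℕ) (l u : ℤ) : ZMod (q + 1) :=
  residueColor q (min (-l / D) ((q + 1) * ((u - l) % q))) (-l)

variable {D : ℕ} {a l u : ℤ}

lemma gapColor_ne_of_same_gap (hq : 0 < q) (ha : 0 ≤ a) (haD : a < D) (hqa : ¬ (q : ℤ) ∣ a) :
    gapColor q D l u ≠ gapColor q D (l - a) (u - a) := by
  have hD : (0 : ℤ) < D := ha.trans_lt haD
  have hle : -l / D ≤ -(l - a) / D := Int.ediv_le_ediv hD (by omega)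
  have hle' : -(l - a) / D ≤ -l / D + 1 := by
    have hstep : (-l + D) / D = -l / D + 1 := by
      rw [Int.add_ediv_of_dvd_right dvd_rfl, Int.ediv_self hD.ne']
    exact hstep ▸ Int.ediv_le_ediv hD (by omega)
  unfold gapColor
  rw [sub_sub_sub_cancel_right]
  refine residueColor_ne hq (by omega) (by omega) ?_
  rwa [show -l - -(l - a) = -a by ring, dvd_neg]

lemma gapColor_eq_of_next_near (hq : 0 < q) (hu : 0 < u) (huD : u < D)
    (hgap : D * (q * (q + 1)) ≤ u - l) :
    gapColor q D l u = residueColor q 0 (-l - (u - l) % q) := by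
  have hD : (0 : ℤ) < D := hu.trans huD
  have hmod : (u - l) % q < q := Int.emod_lt_of_pos _ (by exact_mod_cast hq)
  have hrotations : (q + 1) * ((u - l) % q) ≤ q * (q + 1) - 1 := by nlinarith
  have hstages : (q * (q + 1) - 1 : ℤ) ≤ -l / D := Int.le_ediv_of_mul_le hD (by linarith)
  rw [gapColor, min_eq_right (hrotations.trans hstages), residueColor_mul_succ]

lemma gapColor_eq_of_prev_near (hq : 0 < q) (hl : l ≤ 0) (hlD : -D < l) :
    gapColor q D l u = residueColor q 0 (-l) := by
  have hmod : 0 ≤ (u - l) % q := Int.emod_nonneg _ (by exact_mod_cast hq.ne')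
  rw [gapColor, Int.ediv_eq_zero_of_lt (by omega) (by omega), min_eq_left (by positivity)]

lemma gapColor_ne_of_next_gap {u' : ℤ} (hq : 0 < q) (hu : 0 < u) (hua : u ≤ a) (haD : a < D)
    (hqa : ¬ (q : ℤ) ∣ a) (hgap : D * (q * (q + 1)) ≤ u - l) :
    gapColor q D l u ≠ gapColor q D (u - a) u' := by
  rw [gapColor_eq_of_next_near hq hu (hua.trans_lt haD) hgap,
    gapColor_eq_of_prev_near hq (sub_nonpos.2 hua) (by omega)]
  refine residueColor_ne hq le_rfl (by omega) fun h => hqa ?_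
  have : (q : ℤ) ∣ (u - l) - (u - l) % q := Int.dvd_self_sub_emod
  have key : a = ((u - l) - (u - l) % q) - (-l - (u - l) % q - -(u - a)) := by ring
  exact key ▸ this.sub h

end RotatingColors

section MaximalIndependentSets

variable {G X : Type*} [AddGroup G] [AddAction G X] {S : Finset G}

/-- `B` is independent in the Schreier graph of the action for the finite set `S`: no element of `S`
moves a point of `B` to a point of `B`. -/
def IsSchreierIndependent (S : Finset G) (B : Set X) : Prop :=
  ∀ x ∈ B, ∀ s ∈ S, s +ᵥ x ∉ B

/-- The greedy union of independent sets `B 0, B 1, …`: at each step, add the points of `B n` which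
are not adjacent to a point chosen before. -/
def greedyIndependent (S : Finset G) (B : ℕ → Set X) : ℕ → Set X
  | 0 => ∅
  | n + 1 => greedyIndependent S B n ∪ {x ∈ B n | ∀ s ∈ S, s +ᵥ x ∉ greedyIndependent S B n}

variable {B : ℕ → Set X}

lemma greedyIndependent_mono : Monotone (greedyIndependent S B) :=
  monotone_nat_of_le_succ fun _ => subset_union_left

lemma isSchreierIndependent_greedyIndependent (hS : ∀ s ∈ S, -s ∈ S)
    (hB : ∀ n, IsSchreierIndependent S (B n)) (n : ℕ) :
    IsSchreierIndependent S (greedyIndependent S B n) := by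
  induction n with
  | zero => exact fun _ hx => hx.elim
  | succ n ih =>
    rintro x (hx | ⟨hxB, hx⟩) s hs (hy | ⟨hyB, hy⟩)
    · exact ih x hx s hs hy
    · exact hy (-s) (hS s hs) (by rwa [neg_vadd_vadd])
    · exact hx s hs hy
    · exact hB n x hxB s hs hyB

variable [MeasurableSpace X] [MeasurableConstVAdd G X]

lemma measurableSet_greedyIndependent (hB : ∀ n, MeasurableSet (B n)) (n : ℕ) :
    MeasurableSet (greedyIndependent S B n) := by
  induction n with
  | zero => exact .empty
  | succ n ih =>
    have : {x ∈ B n | ∀ s ∈ S, s +ᵥ x ∉ greedyIndependent S B n} =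
        B n ∩ ⋂ s ∈ S, ((s +ᵥ ·) ⁻¹' greedyIndependent S B n)ᶜ := by
      ext; simp
    rw [greedyIndependent, this]
    exact ih.union <| (hB n).inter <|
      S.measurableSet_biInter fun s _ => (measurable_const_vadd s ih).compl

variable [MeasurableSpace.CountablySeparated X]

lemma exists_measurable_independent_cover (hS : ∀ s ∈ S, ∀ x : X, s +ᵥ x ≠ x) :
    ∃ B : ℕ → Set X, (∀ n, MeasurableSet (B n)) ∧ (∀ n, IsSchreierIndependent S (B n)) ∧
      ∀ x, ∃ n, x ∈ B n := by
  obtain ⟨f, hf, hinj⟩ := MeasurableSpace.measurable_injection_nat_bool_of_countablySeparated X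
  let basis := TopologicalSpace.countableBasis (ℕ → Bool)
  have hbasis := TopologicalSpace.isBasis_countableBasis (ℕ → Bool)
  have hne : basis.Nonempty :=
    let ⟨b, hb, _⟩ := hbasis.exists_subset_of_mem_open (mem_univ default) isOpen_univ
    ⟨b, hb⟩
  obtain ⟨b, hb⟩ := (TopologicalSpace.countable_countableBasis (ℕ → Bool)).exists_eq_range hne
  have hmeas (n : ℕ) : MeasurableSet (f ⁻¹' b n) :=
    hf (hbasis.isOpen (hb ▸ mem_range_self n)).measurableSet
  refine ⟨fun n => f ⁻¹' b n ∩ ⋂ s ∈ S, ((s +ᵥ ·) ⁻¹' (f ⁻¹' b n))ᶜ, fun n => ?_, ?_, fun x => ?_⟩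
  · exact (hmeas n).inter <| S.measurableSet_biInter fun s _ =>
      (measurable_const_vadd s (hmeas n)).compl
  · rintro n x ⟨-, hx⟩ s hs ⟨hy, -⟩
    exact mem_iInter₂.1 hx s hs hy
  · have hopen : IsOpen ((fun s => f (s +ᵥ x)) '' (S : Set G))ᶜ :=
      (S.finite_toSet.image _).isClosed.isOpen_compl
    have hfx : f x ∈ ((fun s => f (s +ᵥ x)) '' (S : Set G))ᶜ := by
      rintro ⟨s, hs, h⟩
      exact hS s hs x (hinj h)
    obtain ⟨v, hv, hxv, hvsub⟩ := hbasis.exists_subset_of_mem_open hfx hopen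
    obtain ⟨n, rfl⟩ : v ∈ range b := hb ▸ hv
    exact ⟨n, hxv, mem_iInter₂.2 fun s hs hy => hvsub hy ⟨s, hs, rfl⟩⟩

theorem exists_measurable_maximal_independent (hneg : ∀ s ∈ S, -s ∈ S)
    (hS : ∀ s ∈ S, ∀ x : X, s +ᵥ x ≠ x) :
    ∃ M : Set X, MeasurableSet M ∧ IsSchreierIndependent S M ∧
      ∀ x ∉ M, ∃ s ∈ S, s +ᵥ x ∈ M := by
  obtain ⟨B, hBm, hBi, hBx⟩ := exists_measurable_independent_cover hS
  refine ⟨⋃ n, greedyIndependent S B n, .iUnion (measurableSet_greedyIndependent hBm), ?_, ?_⟩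
  · intro x hx s hs hy
    obtain ⟨i, hi⟩ := mem_iUnion.1 hx
    obtain ⟨j, hj⟩ := mem_iUnion.1 hy
    exact isSchreierIndependent_greedyIndependent hneg hBi (max i j) x
      (greedyIndependent_mono (le_max_left i j) hi) s hs
      (greedyIndependent_mono (le_max_right i j) hj)
  · intro x hx
    obtain ⟨n, hn⟩ := hBx x
    by_contra! h
    exact hx <| mem_iUnion.2
      ⟨n + 1, .inr ⟨hn, fun s hs hy => h s hs (mem_iUnion.2 ⟨n, hy⟩)⟩⟩

end MaximalIndependentSets

section Markers

variable {X : Type*} [AddAction ℤ X] {R : ℕ} {M : Set X} {x : X} {l u : ℤ}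

/-- `M` meets every orbit in a set with all gaps longer than `R`, and within distance `R` of each
of its points. -/
structure IsMarkerSet (R : ℕ) (M : Set X) : Prop where
  separated : ∀ x ∈ M, ∀ n : ℤ, n ≠ 0 → |n| ≤ R → n +ᵥ x ∉ M
  syndetic : ∀ x, ∃ n : ℤ, |n| ≤ R ∧ n +ᵥ x ∈ M

/-- The previous marker (possibly the point itself) and the next marker (strictly later) of the
point `x` are at relative positions `l` and `u`. -/
structure IsGap (M : Set X) (x : X) (l u : ℤ) : Prop where
  prev : IsGreatest {n : ℤ | n ≤ 0 ∧ n +ᵥ x ∈ M} l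
  next : IsLeast {n : ℤ | 0 < n ∧ n +ᵥ x ∈ M} u

theorem exists_measurable_isMarkerSet [MeasurableSpace X] [MeasurableConstVAdd ℤ X]
    [MeasurableSpace.CountablySeparated X] [IsCancelVAdd ℤ X] (R : ℕ) :
    ∃ M : Set X, MeasurableSet M ∧ IsMarkerSet R M := by
  let S := (Finset.Icc (-R : ℤ) R).erase 0
  have hmem (n : ℤ) : n ∈ S ↔ n ≠ 0 ∧ |n| ≤ R := by simp [S, abs_le]
  obtain ⟨M, hM, hindep, hmax⟩ := exists_measurable_maximal_independent (X := X) (S := S)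
    (fun s hs => by simpa [hmem] using hs)
    (fun s hs x h => ((hmem s).1 hs).1 (IsCancelVAdd.eq_zero_of_vadd h))
  refine ⟨M, hM, fun x hx n hn hnR => hindep x hx n ((hmem n).2 ⟨hn, hnR⟩), fun x => ?_⟩
  by_cases hx : x ∈ M
  · exact ⟨0, by simp, by rwa [zero_vadd]⟩
  · obtain ⟨n, hn, hnM⟩ := hmax x hx
    exact ⟨n, ((hmem n).1 hn).2, hnM⟩

lemma IsMarkerSet.eq_of_abs_sub_le (hM : IsMarkerSet R M) {m n : ℤ} (hm : m +ᵥ x ∈ M)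
    (hn : n +ᵥ x ∈ M) (hmn : |m - n| ≤ R) : m = n := by
  by_contra hne
  refine hM.separated _ hn (m - n) (sub_ne_zero.2 hne) hmn ?_
  rwa [vadd_vadd, sub_add_cancel]

lemma IsMarkerSet.exists_isGap (hM : IsMarkerSet R M) (x : X) : ∃ l u, IsGap M x l u := by
  have hprev : {n : ℤ | n ≤ 0 ∧ n +ᵥ x ∈ M}.Nonempty := by
    obtain ⟨n, hn, hnM⟩ := hM.syndetic ((-R : ℤ) +ᵥ x)
    exact ⟨n + -R, by linarith [(abs_le.1 hn).2], by rwa [← vadd_vadd]⟩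
  have hnext : {n : ℤ | 0 < n ∧ n +ᵥ x ∈ M}.Nonempty := by
    obtain ⟨n, hn, hnM⟩ := hM.syndetic ((R + 1 : ℤ) +ᵥ x)
    exact ⟨n + (R + 1), by linarith [(abs_le.1 hn).1], by rwa [← vadd_vadd]⟩
  have habove : BddAbove {n : ℤ | n ≤ 0 ∧ n +ᵥ x ∈ M} := ⟨0, fun _ h => h.1⟩
  have hbelow : BddBelow {n : ℤ | 0 < n ∧ n +ᵥ x ∈ M} := ⟨0, fun _ h => h.1.le⟩
  exact ⟨_, _, ⟨Int.csSup_mem hprev habove, fun _ => le_csSup habove⟩,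
    ⟨Int.csInf_mem hnext hbelow, fun _ => csInf_le hbelow⟩⟩

lemma IsMarkerSet.lt_sub_of_isGap (hM : IsMarkerSet R M) (h : IsGap M x l u) :
    (R : ℤ) < u - l := by
  by_contra! hle
  have := h.prev.1.1
  have := h.next.1.1
  have := hM.eq_of_abs_sub_le h.next.1.2 h.prev.1.2 (abs_le.2 (by omega))
  omega

lemma IsGap.vadd_of_lt (h : IsGap M x l u) {a : ℤ} (ha : 0 ≤ a) (hau : a < u) :
    IsGap M (a +ᵥ x) (l - a) (u - a) := by
  have hl := h.prev.1.1
  refine ⟨⟨⟨by omega, ?_⟩, ?_⟩, ⟨⟨by omega, ?_⟩, ?_⟩⟩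
  · rw [vadd_vadd, sub_add_cancel]; exact h.prev.1.2
  · rintro n ⟨hn, hnM⟩
    rw [vadd_vadd] at hnM
    have hnext : 0 < n + a → u ≤ n + a := fun hpos => h.next.2 ⟨hpos, hnM⟩
    have hprev : n + a ≤ 0 → n + a ≤ l := fun hneg => h.prev.2 ⟨hneg, hnM⟩
    omega
  · rw [vadd_vadd, sub_add_cancel]; exact h.next.1.2
  · rintro n ⟨hn, hnM⟩
    rw [vadd_vadd] at hnM
    have : u ≤ n + a := h.next.2 ⟨by omega, hnM⟩
    omega

lemma IsMarkerSet.prev_eq_of_isGap_vadd (hM : IsMarkerSet R M) (h : IsGap M x l u) {a l' u' : ℤ}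
    (hua : u ≤ a) (haR : a ≤ R) (h' : IsGap M (a +ᵥ x) l' u') : l' = u - a := by
  have hl' := h'.prev.1.2
  have hle : u - a ≤ l' := h'.prev.2 ⟨by omega, by
    rw [vadd_vadd, sub_add_cancel]; exact h.next.1.2⟩
  rw [vadd_vadd] at hl'
  have := hM.eq_of_abs_sub_le hl' h.next.1.2 (abs_le.2 (by
    have := h'.prev.1.1
    have := h.next.1.1
    omega))
  omega

lemma IsGap.unique {l' u' : ℤ} (h : IsGap M x l u) (h' : IsGap M x l' u') : l = l' ∧ u = u' :=
  ⟨h.prev.unique h'.prev, h.next.unique h'.next⟩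

lemma measurableSet_isGap [MeasurableSpace X] [MeasurableConstVAdd ℤ X] (hM : MeasurableSet M)
    (l u : ℤ) : MeasurableSet {x | IsGap M x l u} := by
  have hmem (n : ℤ) : Measurable fun x : X => n +ᵥ x ∈ M :=
    (measurable_const_vadd n hM).mem
  have : {x | IsGap M x l u} = {x | ((l ≤ 0 ∧ l +ᵥ x ∈ M) ∧ ∀ n : ℤ, n ≤ 0 ∧ n +ᵥ x ∈ M → n ≤ l) ∧
      (0 < u ∧ u +ᵥ x ∈ M) ∧ ∀ n : ℤ, 0 < n ∧ n +ᵥ x ∈ M → u ≤ n} :=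
    ext fun x => ⟨fun h => ⟨⟨h.prev.1, fun _ => @h.prev.2 _⟩, h.next.1, fun _ => @h.next.2 _⟩,
      fun h => ⟨⟨h.1.1, fun _ => h.1.2 _⟩, ⟨h.2.1, fun _ => h.2.2 _⟩⟩⟩
  rw [this]
  exact (((measurable_const.and (hmem l)).and
    (.forall fun n => (measurable_const.and (hmem n)).imp measurable_const)).and
    ((measurable_const.and (hmem u)).and
    (.forall fun n => (measurable_const.and (hmem n)).imp measurable_const))).setOf

theorem exists_measurable_coloring_of_not_dvd [MeasurableSpace X] [MeasurableConstVAdd ℤ X]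
    [MeasurableSpace.CountablySeparated X] [IsCancelVAdd ℤ X] {q : ℕ} (hq : 0 < q) (D : ℕ) :
    ∃ c : X → Fin (q + 1), Measurable c ∧
      ∀ x (a : ℕ), a < D → ¬ q ∣ a → c x ≠ c ((a : ℤ) +ᵥ x) := by
  obtain ⟨M, hMm, hM⟩ := exists_measurable_isMarkerSet (X := X) (D * (q * (q + 1)))
  choose l u hgap using hM.exists_isGap
  have hlu : Measurable fun x => (l x, u x) := measurable_to_countable' fun ⟨i, j⟩ => by
    convert measurableSet_isGap hMm i j using 1
    ext x
    exact ⟨fun h => by cases h; exact hgap x, fun h => Prod.ext_iff.2 ((hgap x).unique h)⟩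
  obtain ⟨toFin⟩ : Nonempty (ZMod (q + 1) ≃ Fin (q + 1)) := ⟨(ZMod.finEquiv (q + 1)).symm.toEquiv⟩
  have hcolor : Measurable fun p : ℤ × ℤ => toFin (gapColor q D p.1 p.2) :=
    measurable_of_countable _
  refine ⟨_, hcolor.comp hlu, fun x a haD hqa => ?_⟩
  have haD' : (a : ℤ) < D := by exact_mod_cast haD
  have hqa' : ¬ (q : ℤ) ∣ a := by exact_mod_cast hqa
  suffices hne : gapColor q D (l x) (u x) ≠
      gapColor q D (l ((a : ℤ) +ᵥ x)) (u ((a : ℤ) +ᵥ x)) from toFin.injective.ne hne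
  have hx := hgap x
  have hy := hgap ((a : ℤ) +ᵥ x)
  rcases lt_or_ge (a : ℤ) (u x) with hau | hua
  · obtain ⟨hl, hu⟩ := hy.unique (hx.vadd_of_lt (Int.natCast_nonneg a) hau)
    rw [hl, hu]
    exact gapColor_ne_of_same_gap hq (Int.natCast_nonneg a) haD' hqa'
  · have hDR : D ≤ D * (q * (q + 1)) := Nat.le_mul_of_pos_right D (by positivity)
    rw [hM.prev_eq_of_isGap_vadd hx hua (by exact_mod_cast haD.le.trans hDR) hy]
    exact gapColor_ne_of_next_gap hq hx.next.1.1 hua haD' hqa'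
      (by exact_mod_cast (hM.lt_sub_of_isGap hx).le)

end Markers

section GenericErgodicity

theorem exists_eventually_residual_eq_of_invariant {G X κ : Type*} [AddGroup G] [AddAction G X]
    [TopologicalSpace X] [BaireSpace X] [Nonempty X] [ContinuousConstVAdd G X]
    [AddAction.IsTopologicallyTransitive G X] [Countable κ] {f : X → κ}
    (hf : ∀ i, BaireMeasurableSet (f ⁻¹' {i})) (hinv : ∀ (g : G) x, f (g +ᵥ x) = f x) :
    ∃ i, ∀ᶠ x in residual X, f x = i := by
  choose U hU hfU using fun i => (hf i).residualEq_isOpen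
  have hmem (i : κ) : ∀ᶠ x in residual X, f x = i ↔ x ∈ U i :=
    (hfU i).mono fun _ => iff_of_eq
  obtain ⟨x, hx⟩ := (dense_of_mem_residual (eventually_countable_forall.2 hmem)).nonempty
  have hne : (U (f x)).Nonempty := ⟨x, (hx (f x)).1 rfl⟩
  generalize f x = i at hne
  refine ⟨i, ?_⟩
  have hdense : Dense (U i) := by
    refine dense_iff_inter_open.2 fun V hV hVne => ?_
    obtain ⟨y, hyV, hy⟩ := ((hU i).dense_iUnion_preimage_vadd G hne).inter_open_nonempty V hV hVne
    obtain ⟨g, hg⟩ := mem_iUnion.1 hy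
    have htranslate : ∀ᶠ z in residual X, f (g +ᵥ z) = i ↔ g +ᵥ z ∈ U i :=
      (tendsto_residual_of_isOpenMap (continuous_const_vadd g) (isOpenMap_vadd g)).eventually
        (hmem i)
    obtain ⟨z, ⟨hzV, hgz⟩, hz, hz'⟩ :=
      (dense_of_mem_residual ((hmem i).and htranslate)).inter_open_nonempty
        (V ∩ (g +ᵥ ·) ⁻¹' U i) (hV.inter ((hU i).preimage (continuous_const_vadd g))) ⟨y, hyV, hg⟩
    exact ⟨z, hzV, hz.1 ((hinv g z).symm.trans (hz'.2 hgz))⟩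
  filter_upwards [residual_of_dense_open (hU i) hdense, hmem i] with y hy hiff
  exact hiff.2 hy

lemma periodic_of_card_le {κ : Type*} [Fintype κ] {q : ℕ} (hκ : Fintype.card κ ≤ q) {f : ℤ → κ}
    (hf : ∀ n (a : ℕ), 0 < a → a < q → f n ≠ f (a + n)) : Function.Periodic f q := by
  intro n
  obtain ⟨i, j, hij, hfij⟩ := Fintype.exists_ne_map_eq_of_card_lt
    (fun i : Fin (q + 1) => f (i + n)) (by simpa using Nat.lt_succ_of_le hκ)
  wlog hlt : i < j generalizing i j
  · exact this j i hij.symm hfij.symm (lt_of_le_of_ne (not_lt.1 hlt) hij.symm)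
  rw [Fin.lt_def] at hlt
  have hji : ¬ (j - i : ℕ) < q := fun h => by
    refine hf (i + n) (j - i) (by omega) h ?_
    convert hfij using 2
    omega
  have hi : (i : ℕ) = 0 := by omega
  have hj : (j : ℕ) = q := by omega
  simpa [hi, hj, add_comm] using hfij.symm

theorem lt_card_of_baireMeasurable_coloring {X κ : Type*} [AddAction ℤ X]
    [TopologicalSpace X] [BaireSpace X] [Nonempty X] [ContinuousConstVAdd ℤ X] [Fintype κ] {q : ℕ}
    [AddAction.IsTopologicallyTransitive (AddSubgroup.zmultiples (q : ℤ)) X] (hq : 2 ≤ q)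
    {c : X → κ} (hc : ∀ i, BaireMeasurableSet (c ⁻¹' {i}))
    (hne : ∀ x (a : ℕ), 0 < a → a < q → c x ≠ c ((a : ℤ) +ᵥ x)) : q < Fintype.card κ := by
  by_contra! hκ
  have hper (x : X) : Function.Periodic (fun n : ℤ => c (n +ᵥ x)) q :=
    periodic_of_card_le hκ fun n a ha haq => by
      simpa only [vadd_vadd] using hne (n +ᵥ x) a ha haq
  have hinv (g : AddSubgroup.zmultiples (q : ℤ)) (x : X) : c (g +ᵥ x) = c x := by
    obtain ⟨_, n, rfl⟩ := g
    simpa [AddSubgroup.vadd_def] using (hper x).int_mul_eq n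
  have : ContinuousConstVAdd (AddSubgroup.zmultiples (q : ℤ)) X :=
    ⟨fun g => continuous_const_vadd (g : ℤ)⟩
  obtain ⟨i, hi⟩ := exists_eventually_residual_eq_of_invariant hc hinv
  have hi_vadd : ∀ᶠ x in residual X, c ((1 : ℤ) +ᵥ x) = i :=
    (tendsto_residual_of_isOpenMap (continuous_const_vadd 1) (isOpenMap_vadd 1)).eventually hi
  obtain ⟨x, hx, hx'⟩ := (dense_of_mem_residual (hi.and hi_vadd)).nonempty
  exact hne x 1 one_pos hq (by exact_mod_cast hx.trans hx'.symm)

end GenericErgodicity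

section FreePart

section Shift

variable {α : Type*}

lemma shift_zero (x : ℤ → α) : shift 0 x = x := by
  funext n; simp only [shift, add_zero]

lemma shift_add (s t : ℤ) (x : ℤ → α) : shift (s + t) x = shift s (shift t x) := by
  funext n; simp only [shift, add_assoc]

variable [TopologicalSpace α]

lemma continuous_shift (s : ℤ) : Continuous (shift s : (ℤ → α) → ℤ → α) :=
  continuous_pi fun n => continuous_apply (n + s)

lemma exists_finset_forall_eqOn_mem {ι : Type*} {U : Set (ι → α)} (hU : IsOpen U) {x : ι → α}
    (hx : x ∈ U) : ∃ I : Finset ι, ∀ y, EqOn y x I → y ∈ U := by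
  obtain ⟨I, u, hu, hsub⟩ := isOpen_pi_iff.1 hU x hx
  exact ⟨I, fun y hy => hsub fun i hi => by rw [hy hi]; exact (hu i hi).2⟩

lemma eventually_cofinite_inter_preimage_shift_nonempty {U V : Set (ℤ → α)} (hU : IsOpen U)
    (hUne : U.Nonempty) (hV : IsOpen V) (hVne : V.Nonempty) :
    ∀ᶠ s in cofinite, (U ∩ shift s ⁻¹' V).Nonempty := by
  classical
  obtain ⟨x, hx⟩ := hUne
  obtain ⟨y, hy⟩ := hVne
  obtain ⟨I, hI⟩ := exists_finset_forall_eqOn_mem hU hx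
  obtain ⟨J, hJ⟩ := exists_finset_forall_eqOn_mem hV hy
  filter_upwards [(Finset.image₂ (· - ·) I J).finite_toSet.compl_mem_cofinite] with s hs
  refine ⟨fun n => if n ∈ I then x n else y (n - s), hI _ fun n hn => if_pos hn,
    hJ _ fun n hn => ?_⟩
  have hnI : n + s ∉ I := fun h =>
    hs (Finset.mem_coe.2 (Finset.mem_image₂.2 ⟨_, h, n, hn, by ring⟩))
  simp only [shift, if_neg hnI, add_sub_cancel_right]

end Shift

lemma isOpen_setOf_shift_ne (s : ℤ) : IsOpen {x : ℤ → Bool | shift s x ≠ x} :=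
  isOpen_ne_fun (continuous_shift s) continuous_id

lemma dense_setOf_shift_ne {s : ℤ} (hs : s ≠ 0) : Dense {x : ℤ → Bool | shift s x ≠ x} := by
  refine dense_iff_inter_open.2 fun U hU ⟨x, hx⟩ => ?_
  obtain ⟨I, hI⟩ := exists_finset_forall_eqOn_mem hU hx
  obtain ⟨n, hn⟩ := Infinite.exists_notMem_finset I
  refine ⟨Function.update x n (!x (n + s)), hI _ fun m hm => ?_, fun h => ?_⟩
  · exact Function.update_of_ne (ne_of_mem_of_not_mem hm hn) _ _
  · have := congrFun h n
    simp [shift, hs] at this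

lemma freePart_eq_iInter : FreePart = ⋂ s : {s : ℤ // s ≠ 0}, {x | shift s x ≠ x} := by
  ext x; simp [FreePart]

lemma isGδ_freePart : IsGδ FreePart := by
  rw [freePart_eq_iInter]
  exact .iInter_of_isOpen fun s => isOpen_setOf_shift_ne s

lemma dense_freePart : Dense FreePart := by
  rw [freePart_eq_iInter]
  exact dense_iInter_of_isOpen (fun s => isOpen_setOf_shift_ne s) fun s => dense_setOf_shift_ne s.2

lemma shift_mem_freePart {x : ℤ → Bool} (hx : x ∈ FreePart) (t : ℤ) : shift t x ∈ FreePart := by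
  intro s hs h
  refine hx s hs ?_
  have := congrArg (shift (-t)) h
  rwa [← shift_add, ← shift_add, ← shift_add, add_right_comm, neg_add_cancel, zero_add,
    shift_zero] at this

instance : AddAction ℤ FreePart where
  vadd s x := ⟨shift s x, shift_mem_freePart x.2 s⟩
  zero_vadd _ := Subtype.ext (shift_zero _)
  add_vadd s t _ := Subtype.ext (shift_add s t _)

instance : IsCancelVAdd ℤ FreePart :=
  isCancelVAdd_iff_eq_zero_of_vadd_eq.2 fun s x h => by_contra fun hs =>
    x.2 s hs (congrArg Subtype.val h)

instance : ContinuousConstVAdd ℤ FreePart where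
  continuous_const_vadd s := ((continuous_shift s).comp continuous_subtype_val).subtype_mk _

instance : MeasurableConstVAdd ℤ FreePart where
  measurable_const_vadd s := (continuous_const_vadd s).measurable

instance : Nonempty FreePart := dense_freePart.nonempty.to_subtype

instance : BaireSpace FreePart := isGδ_freePart.baireSpace_of_dense dense_freePart

lemma isTopologicallyTransitive_zmultiples_freePart {q : ℤ} (hq : q ≠ 0) :
    AddAction.IsTopologicallyTransitive (AddSubgroup.zmultiples q) FreePart where
  exists_vadd_inter := by
    rintro _ _ ⟨U, hU, rfl⟩ hUne ⟨V, hV, rfl⟩ hVne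
    have hmixing := eventually_cofinite_inter_preimage_shift_nonempty
      hU (hUne.image _ |>.mono (image_preimage_subset _ _)) hV
      (hVne.image _ |>.mono (image_preimage_subset _ _))
    obtain ⟨n, hn⟩ := ((mul_left_injective₀ hq).tendsto_cofinite.eventually hmixing).exists
    obtain ⟨z, ⟨hzU, hzV⟩, hz⟩ := dense_freePart.inter_open_nonempty _
      (hU.inter (hV.preimage (continuous_shift (n * q)))) hn
    exact ⟨⟨n * q, n, by simp⟩, _, vadd_mem_vadd_set (a := _) (show ⟨z, hz⟩ ∈ _ from hzU), hzV⟩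

end FreePart

lemma isBorelColoring_iff {A : Finset ℕ} {k : ℕ} {c : FreePart → Fin k} :
    IsBorelColoring A c ↔ Measurable c ∧ ∀ x, ∀ a ∈ A, c x ≠ c ((a : ℤ) +ᵥ x) :=
  and_congr_right fun _ => forall_congr' fun x => forall₂_congr fun a _ =>
    ⟨fun h => h (shift_mem_freePart x.2 a), fun h _ => h⟩

theorem borelChromatic_eq_succ {q : ℕ} (hq : 2 ≤ q) {A : Finset ℕ}
    (hsub : ∀ a, 0 < a → a < q → a ∈ A) (hndvd : ∀ a ∈ A, ¬ q ∣ a) :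
    borelChromatic A = q + 1 := by
  refine IsLeast.csInf_eq ⟨?_, ?_⟩
  · obtain ⟨c, hc, hne⟩ := exists_measurable_coloring_of_not_dvd (X := FreePart) (q := q) (by omega)
      (A.sup id + 1)
    exact ⟨c, isBorelColoring_iff.2 ⟨hc, fun x a ha =>
      hne x a (Nat.lt_succ_of_le (A.le_sup (f := id) ha)) (hndvd a ha)⟩⟩
  · rintro k ⟨c, hc⟩
    obtain ⟨hc, hne⟩ := isBorelColoring_iff.1 hc
    have := isTopologicallyTransitive_zmultiples_freePart (q := (q : ℤ)) (by omega)
    simpa using lt_card_of_baireMeasurable_coloring hq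
      (fun i => (hc (measurableSet_singleton i)).baireMeasurableSet)
      fun x a ha haq => hne x a (hsub a ha haq)

lemma infinite_setOf_not_dvd {q : ℕ} (hq : 2 ≤ q) : {a : ℕ | ¬ q ∣ a}.Infinite :=
  Nat.frequently_atTop_iff_infinite.1 <| (Nat.frequently_mod_eq hq).mono fun a ha => by
    simp [Nat.dvd_iff_mod_eq_zero, ha]

lemma exists_finset_superset_card_eq {α : Type*} {s : Finset α} {t : Set α} (ht : t.Infinite)
    (hst : (s : Set α) ⊆ t) {n : ℕ} (hn : s.card ≤ n) :
    ∃ A : Finset α, s ⊆ A ∧ (A : Set α) ⊆ t ∧ A.card = n := by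
  classical
  obtain ⟨B, hB, hcard⟩ := (ht.sdiff s.finite_toSet).exists_subset_card_eq (n - s.card)
  have hdisj : Disjoint s B := Finset.disjoint_right.2 fun _ hb => (hB hb).2
  refine ⟨s ∪ B, Finset.subset_union_left, ?_, ?_⟩
  · rw [Finset.coe_union]
    exact union_subset hst (hB.trans sdiff_subset)
  · rw [Finset.card_union_of_disjoint hdisj, hcard, Nat.add_sub_cancel' hn]

/-- For all `n ≥ 1` and `3 ≤ k ≤ n + 2`, there is a set
`{a₁ < ⋯ < aₙ}` of positive integers with `gcd(a₁,…,aₙ) = 1` and `χ(a₁,…,aₙ) = k`. -/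
theorem exists_generating_set_with_given_borelChromatic
    (n k : ℕ) (hn : 1 ≤ n) (hk3 : 3 ≤ k) (hkn : k ≤ n + 2) :
    ∃ A : Finset ℕ, A.card = n ∧ (∀ a ∈ A, 0 < a) ∧ A.gcd id = 1 ∧
      borelChromatic A = k := by
  obtain ⟨q, rfl⟩ : ∃ q, k = q + 1 := ⟨k - 1, by omega⟩
  have hq : 2 ≤ q := by omega
  have hsmall : (Finset.Ioo 0 q : Set ℕ) ⊆ {a : ℕ | ¬ q ∣ a} := fun a ha => by
    obtain ⟨h0, hlt⟩ := Finset.mem_Ioo.1 (Finset.mem_coe.1 ha)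
    exact Nat.not_dvd_of_pos_of_lt h0 hlt
  have hcard : (Finset.Ioo 0 q).card ≤ n := by rw [Nat.card_Ioo]; omega
  obtain ⟨A, hsub, hndvd, hA⟩ :=
    exists_finset_superset_card_eq (infinite_setOf_not_dvd hq) hsmall hcard
  have hmem (a : ℕ) (h0 : 0 < a) (haq : a < q) : a ∈ A := hsub (Finset.mem_Ioo.2 ⟨h0, haq⟩)
  refine ⟨A, hA, fun a ha => Nat.pos_of_ne_zero fun h => hndvd ha (h ▸ dvd_zero q), ?_,
    borelChromatic_eq_succ hq hmem fun a ha => hndvd ha⟩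
  exact Nat.dvd_one.1 (Finset.gcd_dvd (f := id) (hmem 1 one_pos hq))
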